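/- For every claim C : Ω → ℝ^d and every p ∈ P^b(C) ∩ P^s(C), all three value sets coincide: V(x0 − p, C) = V(x0, 0) = V(x0 + p, −C). -/

import Mathlib

open Pointwise

/-!
The value set is the lower image of a concave maximisation problem, so its graph
`{(x, C, v) | v ∈ V(x, C)}` is convex. As `(x₀, 0)` is the midpoint of `(x₀ - p, C)` and
`(x₀ + p, -C)`, midpoints of a point of `V(x₀ - p, C)` and a point of `V(x₀ + p, -C)` lie in
`V(x₀, 0)`. If `p` is a sell price, `V(x₀, 0) ⊆ V(x₀ + p, -C)`, so every `v ∈ V(x₀ - p, C)` is the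
centre of a homothety of ratio `1/2` mapping the closed set `V(x₀, 0)` to itself. Iterating it from
any point of `V(x₀, 0)` converges to `v`, hence `v ∈ V(x₀, 0)`. Replacing `(p, C)` by `(-p, -C)`
exchanges buy and sell prices and gives the other inclusion.
-/

open AffineMap Filter Set Topology

section Homothety

variable {V P : Type*} [AddCommGroup V] [Module ℝ V] [TopologicalSpace V] [ContinuousSMul ℝ V]
  [AddTorsor V P] [TopologicalSpace P] [IsTopologicalAddTorsor P] {S : Set P} {a : P} {t : ℝ}

theorem tendsto_homothety_pow (a b : P) (ht : |t| < 1) :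
    Tendsto (fun n : ℕ ↦ homothety a (t ^ n) b) atTop (𝓝 a) := by
  have hcont : Continuous fun c : ℝ ↦ homothety a c b := lineMap_continuous
  simpa only [Function.comp_def, homothety_zero, coe_const, Function.const_apply] using
    (hcont.tendsto 0).comp (tendsto_pow_atTop_nhds_zero_of_abs_lt_one ht)

theorem mem_of_mapsTo_homothety (hS : IsClosed S) (hne : S.Nonempty) (ht : |t| < 1)
    (hmaps : MapsTo (homothety a t) S S) : a ∈ S := by
  obtain ⟨b, hb⟩ := hne
  have hpow (n : ℕ) : homothety a (t ^ n) b ∈ S := by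
    induction n with
    | zero => simpa using hb
    | succ n ih =>
      rw [pow_succ', homothety_mul_apply]
      exact hmaps ih
  exact hS.mem_of_tendsto (tendsto_homothety_pow a b ht) (Eventually.of_forall hpow)

end Homothety

section ExpectedUtility

theorem concaveOn_pi {κ X : Type*} {F : κ → Type*} [AddCommMonoid X] [Module ℝ X]
    [∀ k, AddCommMonoid (F k)] [∀ k, PartialOrder (F k)] [∀ k, Module ℝ (F k)]
    {s : Set X} {f : X → ∀ k, F k} (hs : Convex ℝ s)
    (hf : ∀ k, ConcaveOn ℝ s fun x ↦ f x k) : ConcaveOn ℝ s f :=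
  ⟨hs, fun _ hx _ hy _ _ ha hb hab k ↦ (hf k).2 hx hy ha hb hab⟩

theorem concaveOn_sum {ι X F : Type*} [AddCommMonoid X] [Module ℝ X] [AddCommMonoid F]
    [PartialOrder F] [IsOrderedAddMonoid F] [Module ℝ F] {s : Set X} {f : ι → X → F}
    (t : Finset ι) (hs : Convex ℝ s) (hf : ∀ i ∈ t, ConcaveOn ℝ s (f i)) :
    ConcaveOn ℝ s fun x ↦ ∑ i ∈ t, f i x := by
  classical
  induction t using Finset.induction_on with
  | empty => simpa using concaveOn_const (0 : F) hs
  | insert i t hi ih =>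
    rw [Finset.forall_mem_insert] at hf
    simpa only [Finset.sum_insert hi] using! hf.1.add (ih hf.2)

variable {Ω ι κ E : Type*} [Fintype Ω]

/-- The vector-valued expected utility of the random vector `W`, with one component for each pair of
a utility function `u i` and a probability vector `Q j`; the `Q j` are arbitrary weights here. -/
def expectedUtility (Q : κ → Ω → ℝ) (u : ι → E → ℝ) (W : Ω → E) (ij : ι × κ) : ℝ :=
  ∑ ω, Q ij.2 ω * u ij.1 (W ω)

theorem concaveOn_expectedUtility [AddCommMonoid E] [Module ℝ E] {Q : κ → Ω → ℝ} {u : ι → E → ℝ}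
    (hQ : ∀ j ω, 0 ≤ Q j ω) (hu : ∀ i, ConcaveOn ℝ univ (u i)) :
    ConcaveOn ℝ univ (expectedUtility Q u) := by
  refine concaveOn_pi convex_univ fun ij ↦ concaveOn_sum _ convex_univ fun ω _ ↦ ?_
  exact ((hu ij.1).comp_linearMap (LinearMap.proj (R := ℝ) (φ := fun _ : Ω ↦ E) ω)).smul (hQ ij.2 ω)

end ExpectedUtility

section Attainable

variable {E X : Type*}

theorem convex_graph_of_smul_add_smul_subset [AddCommMonoid E] [Module ℝ E] [AddCommMonoid X]
    [Module ℝ X] {A : E → Set X}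
    (hA : ∀ (x y : E) (a : ℝ), 0 ≤ a → a ≤ 1 →
      a • A x + (1 - a) • A y ⊆ A (a • x + (1 - a) • y)) :
    Convex ℝ {z : E × X | z.2 ∈ A z.1} := by
  rintro ⟨x, W⟩ hW ⟨y, Z⟩ hZ a b ha hb hab
  obtain rfl : b = 1 - a := by linarith
  exact hA x y a ha (by linarith) (add_mem_add (smul_mem_smul_set hW) (smul_mem_smul_set hZ))

theorem nonempty_of_add_const_mem {Ω : Type*} [AddCommGroup E] {A : E → Set (Ω → E)}
    (hA : ∀ x, ∀ W ∈ A x, ∀ c : E, (fun ω ↦ W ω + c) ∈ A (x + c)) {x y : E}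
    (hx : (A x).Nonempty) : (A y).Nonempty := by
  obtain ⟨W, hW⟩ := hx
  exact ⟨_, add_sub_cancel x y ▸ hA x W hW (y - x)⟩

end Attainable

section ValueSet

variable {E X F : Type*} [TopologicalSpace F]

/-- The value set of the set optimisation problem with initial endowment `x` and claim `C`: the
closed lower set generated by the utilities `U (W + C)` of the attainable positions `W ∈ A x`. The
lower set is written with `≤` instead of subtracting the nonnegative cone. -/
def valueSet [Add X] [LE F] (U : X → F) (A : E → Set X) (x : E) (C : X) : Set F :=
  closure {v | ∃ W ∈ A x, v ≤ U (W + C)}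

theorem valueSet_nonempty_iff [Add X] [Preorder F] {U : X → F} {A : E → Set X} {x : E} {C : X} :
    (valueSet U A x C).Nonempty ↔ (A x).Nonempty :=
  closure_nonempty_iff.trans
    ⟨fun ⟨_, W, hW, _⟩ ↦ ⟨W, hW⟩, fun ⟨W, hW⟩ ↦ ⟨U (W + C), W, hW, le_rfl⟩⟩

/-- The set-valued buy price of the claim `C` at initial endowment `x₀`: the prices `p` at which
buying `C` is at least as good as not trading. -/
def buyPrices [AddGroup E] [AddGroup X] [LE F] (U : X → F) (A : E → Set X) (x₀ : E) (C : X) :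
    Set E :=
  {p | valueSet U A x₀ 0 ⊆ valueSet U A (x₀ - p) C}

/-- The set-valued sell price of the claim `C` at initial endowment `x₀`: the prices `p` at which
selling `C` is at least as good as not trading. -/
def sellPrices [AddGroup E] [AddGroup X] [LE F] (U : X → F) (A : E → Set X) (x₀ : E) (C : X) :
    Set E :=
  {p | valueSet U A x₀ 0 ⊆ valueSet U A (x₀ + p) (-C)}

theorem neg_mem_sellPrices_neg_iff [AddGroup E] [AddGroup X] [LE F] {U : X → F} {A : E → Set X}
    {x₀ p : E} {C : X} : -p ∈ sellPrices U A x₀ (-C) ↔ p ∈ buyPrices U A x₀ C := by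
  simp only [sellPrices, buyPrices, mem_ofPred_eq, neg_neg, sub_eq_add_neg]

variable [AddCommGroup E] [Module ℝ E] [AddCommGroup X] [Module ℝ X]
  [AddCommGroup F] [PartialOrder F] [IsOrderedAddMonoid F] [Module ℝ F] [PosSMulMono ℝ F]
  {U : X → F} {A : E → Set X} {x₀ p : E} {C : X}

theorem convex_graph_valueSet [ContinuousAdd F] [ContinuousConstSMul ℝ F] (hU : ConcaveOn ℝ univ U)
    (hA : Convex ℝ {z : E × X | z.2 ∈ A z.1}) :
    Convex ℝ {z : E × X × F | z.2.2 ∈ valueSet U A z.1 z.2.1} := by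
  rintro ⟨x, C, v⟩ hv ⟨y, D, w⟩ hw a b ha hb hab
  refine map_mem_closure₂ (f := fun v w ↦ a • v + b • w) (by fun_prop) hv hw ?_
  rintro v ⟨W, hW, hv⟩ w ⟨Z, hZ, hw⟩
  refine ⟨a • W + b • Z, @hA (x, W) hW (y, Z) hZ a b ha hb hab, ?_⟩
  calc
    a • v + b • w ≤ a • U (W + C) + b • U (Z + D) := by gcongr
    _ ≤ U (a • (W + C) + b • (Z + D)) := hU.2 trivial trivial ha hb hab
    _ = U (a • W + b • Z + (a • C + b • D)) := by
      rw [smul_add, smul_add, add_add_add_comm]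

theorem midpoint_mem_valueSet [ContinuousAdd F] [ContinuousConstSMul ℝ F] (hU : ConcaveOn ℝ univ U)
    (hA : Convex ℝ {z : E × X | z.2 ∈ A z.1}) {x y : E} {C D : X} {v w : F}
    (hv : v ∈ valueSet U A x C) (hw : w ∈ valueSet U A y D) :
    midpoint ℝ v w ∈ valueSet U A (midpoint ℝ x y) (midpoint ℝ C D) := by
  simpa only [midpoint, mem_ofPred_eq, fst_lineMap, snd_lineMap] using
    (convex_graph_valueSet hU hA).midpoint_mem (x := (x, C, v)) (y := (y, D, w)) hv hw

variable [IsTopologicalAddGroup F] [ContinuousSMul ℝ F]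

theorem valueSet_sub_subset_of_mem_sellPrices (hU : ConcaveOn ℝ univ U)
    (hA : Convex ℝ {z : E × X | z.2 ∈ A z.1}) (hne : ∀ x, (A x).Nonempty → (A x₀).Nonempty)
    (hp : p ∈ sellPrices U A x₀ C) : valueSet U A (x₀ - p) C ⊆ valueSet U A x₀ 0 := by
  intro v hv
  have hne₀ : (valueSet U A x₀ 0).Nonempty :=
    valueSet_nonempty_iff.2 (hne _ (valueSet_nonempty_iff.1 ⟨v, hv⟩))
  refine mem_of_mapsTo_homothety (t := 2⁻¹) isClosed_closure hne₀ (by norm_num) fun w hw ↦ ?_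
  simpa only [homothety_inv_two, midpoint_sub_add, midpoint_self_neg] using
    midpoint_mem_valueSet hU hA hv (hp hw)

theorem valueSet_add_neg_subset_of_mem_buyPrices (hU : ConcaveOn ℝ univ U)
    (hA : Convex ℝ {z : E × X | z.2 ∈ A z.1}) (hne : ∀ x, (A x).Nonempty → (A x₀).Nonempty)
    (hp : p ∈ buyPrices U A x₀ C) : valueSet U A (x₀ + p) (-C) ⊆ valueSet U A x₀ 0 := by
  simpa only [sub_neg_eq_add] using
    valueSet_sub_subset_of_mem_sellPrices hU hA hne (neg_mem_sellPrices_neg_iff.2 hp)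

theorem stmt10_general (hU : ConcaveOn ℝ univ U)
    (hA : Convex ℝ {z : E × X | z.2 ∈ A z.1}) (hne : ∀ x, (A x).Nonempty → (A x₀).Nonempty)
    (hp : p ∈ buyPrices U A x₀ C ∩ sellPrices U A x₀ C) :
    valueSet U A (x₀ - p) C = valueSet U A x₀ 0 ∧
      valueSet U A x₀ 0 = valueSet U A (x₀ + p) (-C) :=
  ⟨(valueSet_sub_subset_of_mem_sellPrices hU hA hne hp.2).antisymm hp.1,
    hp.2.antisymm (valueSet_add_neg_subset_of_mem_buyPrices hU hA hne hp.1)⟩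

end ValueSet

theorem stmt10
    {d r s : ℕ} (hd : 0 < d) (hr : 0 < r) (hs : 0 < s)
    {Ω : Type} [Fintype Ω] [Nonempty Ω]
    (Q : Fin s → Ω → ℝ)
    (hQ0 : ∀ j ω, 0 ≤ Q j ω) (hQ1 : ∀ j, ∑ ω : Ω, Q j ω = 1)
    (u : Fin r → (Fin d → ℝ) → ℝ)
    (hcont : ∀ i, Continuous (u i))
    (hconc : ∀ i, ConcaveOn ℝ Set.univ (u i))
    (hmono : ∀ i, Monotone (u i))
    (hstrict : ∀ i (x y : Fin d → ℝ), (∀ k, x k < y k) → u i x < u i y)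
    (A : (Fin d → ℝ) → Set (Ω → Fin d → ℝ))
    (hAconv : ∀ x, Convex ℝ (A x))
    (hAcomb : ∀ (x y : Fin d → ℝ) (a : ℝ), 0 ≤ a → a ≤ 1 →
      a • A x + (1 - a) • A y ⊆ A (a • x + (1 - a) • y))
    (hAmono : ∀ x y : Fin d → ℝ, x ≤ y → A x ⊆ A y)
    (hAtr : ∀ (x : Fin d → ℝ) (W : Ω → Fin d → ℝ), W ∈ A x →
      ∀ c : Fin d → ℝ, (fun ω => W ω + c) ∈ A (x + c))
    (x0 : Fin d → ℝ) :
    let U : (Ω → Fin d → ℝ) → (Fin r × Fin s → ℝ) :=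
      fun W ij => ∑ ω : Ω, Q ij.2 ω * u ij.1 (W ω)
    let V : (Fin d → ℝ) → (Ω → Fin d → ℝ) → Set (Fin r × Fin s → ℝ) :=
      fun x C => closure {v | ∃ W ∈ A x, v ≤ U (W + C)}
    let Pb : (Ω → Fin d → ℝ) → Set (Fin d → ℝ) :=
      fun C => {p | V x0 0 ⊆ V (x0 - p) C}
    let Ps : (Ω → Fin d → ℝ) → Set (Fin d → ℝ) :=
      fun C => {p | V x0 0 ⊆ V (x0 + p) (-C)}
    ∀ (C : Ω → Fin d → ℝ) (p : Fin d → ℝ), p ∈ Pb C ∩ Ps C →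
      V (x0 - p) C = V x0 0 ∧ V x0 0 = V (x0 + p) (-C) := by
  intro U V Pb Ps C p hp
  exact stmt10_general (U := expectedUtility Q u) (concaveOn_expectedUtility hQ0 hconc)
    (convex_graph_of_smul_add_smul_subset hAcomb) (fun _ ↦ nonempty_of_add_const_mem hAtr) hp
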